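/- arXiv:2107.01082 — 3 statements merged into one kernel-verified Lean document; each statement's English description precedes it below -/
import Mathlib

section
/- There exists a constant c > 0, depending only on T, α, ω₀ and ω₁, such that whenever ω₁ solves the damage integral equation with data (d₁₀, y₁) and ω₂ solves it with data (d₂₀, y₂) (initial values d₁₀, d₂₀ ∈ [0, ω₀] and admissible sources y₁, y₂), then max_{t∈[0,T]} |ω₁(t) − ω₂(t)| ≤ c·( |d₁₀ − d₂₀| + ess sup_{t∈[0,T]} |y₁(t) − y₂(t)| ). -/
open MeasureTheory Set

/-- `y` is an admissible source: measurable, and `0 ≤ y ≤ T⁻¹(ω₁ − ω₀)(1 − ω₁)^α`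
a.e. on `[0, T]`. -/
def AdmissibleSource (T a w0 w1 : ℝ) (y : ℝ → ℝ) : Prop :=
  Measurable y ∧
    ∀ᵐ t ∂(volume.restrict (Icc (0 : ℝ) T)),
      0 ≤ y t ∧ y t ≤ T⁻¹ * (w1 - w0) * (1 - w1) ^ a

/-- `ω` is a continuous solution of the damage integral equation
`ω(t) = d₀ + ∫₀ᵗ (1 − ω(ξ))^(−α) y(ξ) dξ` on `[0, T]`, with values in `[0, ω₁]`. -/
def SolvesDamage (T a w1 d0 : ℝ) (y ω : ℝ → ℝ) : Prop :=
  ContinuousOn ω (Icc (0 : ℝ) T) ∧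
  (∀ t ∈ Icc (0 : ℝ) T, ω t ∈ Icc (0 : ℝ) w1) ∧
  (∀ t ∈ Icc (0 : ℝ) T, ω t = d0 + ∫ ξ in (0 : ℝ)..t, (1 - ω ξ) ^ (-a) * y ξ)

/-!
The equation `ω' = (1 - ω) ^ (-α) * y` is separable. If `φ' = (1 - ·) ^ α`, then `φ ∘ ω` is
absolutely continuous and the chain rule gives `φ (ω t) = φ d₀ + ∫ y` over `[0, t]`, so that
`φ (ω₁ t) - φ (ω₂ t)` is controlled by the data alone and no Grönwall argument is needed. On
`[0, w1]` with `w1 < 1` the derivative `φ'` lies between two positive constants, hence `φ` is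
bi-Lipschitz there and the estimate passes back to `ω₁ t - ω₂ t`.
-/

open Filter
open scoped NNReal

theorem absolutelyContinuousOnInterval_comp_of_lipschitzOnWith {X Y : Type*}
    [PseudoMetricSpace X] [PseudoMetricSpace Y] {φ : X → Y} {u : ℝ → X} {s : Set X} {K : ℝ≥0}
    {a b : ℝ} (hφ : LipschitzOnWith K φ s) (hu : AbsolutelyContinuousOnInterval u a b)
    (hus : MapsTo u (uIcc a b) s) :
    AbsolutelyContinuousOnInterval (φ ∘ u) a b := by
  refine squeeze_zero' (.of_forall fun E => Finset.sum_nonneg fun _ _ => dist_nonneg) ?_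
    (by simpa using Tendsto.const_mul (K : ℝ) hu)
  filter_upwards [mem_inf_of_right (mem_principal_self _)] with E hE
  rw [Finset.mul_sum]
  exact Finset.sum_le_sum fun i hi =>
    hφ.dist_le_mul _ (hus (hE.1 i hi).1) _ (hus (hE.1 i hi).2)

theorem integral_comp_mul_deriv_of_absolutelyContinuousOnInterval {φ φ' u : ℝ → ℝ} {a b : ℝ}
    (hu : AbsolutelyContinuousOnInterval u a b)
    (hφ : ∀ x ∈ u '' uIcc a b, HasDerivAt φ (φ' x) x)
    (hφ' : ContinuousOn φ' (u '' uIcc a b)) :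
    ∫ t in a..b, φ' (u t) * deriv u t = φ (u b) - φ (u a) := by
  have hconvex : Convex ℝ (u '' uIcc a b) :=
    (isPreconnected_uIcc.image u hu.continuousOn).convex
  have hcompact : IsCompact (u '' uIcc a b) := isCompact_uIcc.image_of_continuousOn hu.continuousOn
  obtain ⟨C, hC⟩ := hcompact.exists_bound_of_continuousOn hφ'
  have hlip : LipschitzOnWith C.toNNReal φ (u '' uIcc a b) :=
    hconvex.lipschitzOnWith_of_nnnorm_hasDerivWithin_le
      (fun x hx => (hφ x hx).hasDerivWithinAt)
      (fun x hx => NNReal.le_toNNReal_of_coe_le (hC x hx))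
  rw [← Function.comp_apply (f := φ), ← Function.comp_apply (f := φ) (x := a),
    ← (absolutelyContinuousOnInterval_comp_of_lipschitzOnWith hlip hu
      (mapsTo_image u _)).integral_deriv_eq_sub]
  refine intervalIntegral.integral_congr_ae ?_
  filter_upwards [hu.ae_differentiableAt] with t hdiff ht
  have ht' := uIoc_subset_uIcc ht
  exact ((hφ _ (mem_image_of_mem u ht')).comp t (hdiff ht').hasDerivAt).deriv.symm

theorem exists_mem_image_sub_eq_mul_of_hasDerivAt {φ φ' : ℝ → ℝ} {s : Set ℝ} (hs : Convex ℝ s)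
    (hφ : ∀ x ∈ s, HasDerivAt φ (φ' x) x) {x z : ℝ} (hx : x ∈ s) (hz : z ∈ s) :
    ∃ w ∈ s, φ x - φ z = φ' w * (x - z) := by
  obtain ⟨w, hw, h⟩ := domain_mvt (fun x hx => (hφ x hx).hasDerivWithinAt.hasFDerivWithinAt)
    hs hz hx
  exact ⟨w, hs.segment_subset hz hx hw, by simpa [mul_comm] using h⟩

/-- `u` is a continuous `s`-valued solution, on the interval between `a` and `b`, of the separable
equation `u' = k(u) y`, `u(a) = d`, in integral form (so that `y` need only be integrable). -/
structure IsSeparableSolution (k y : ℝ → ℝ) (s : Set ℝ) (a b d : ℝ) (u : ℝ → ℝ) : Prop where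
  continuousOn : ContinuousOn u (uIcc a b)
  mapsTo : MapsTo u (uIcc a b) s
  eq_add_integral : ∀ t ∈ uIcc a b, u t = d + ∫ ξ in a..t, k (u ξ) * y ξ

namespace IsSeparableSolution

variable {φ k y y₁ y₂ u u₁ u₂ : ℝ → ℝ} {s : Set ℝ} {a b d d₁ d₂ m L : ℝ}

theorem initial_mem (hu : IsSeparableSolution k y s a b d u) : d ∈ s := by
  simpa [hu.eq_add_integral a left_mem_uIcc] using hu.mapsTo left_mem_uIcc

theorem antideriv_sub_eq_integral (hu : IsSeparableSolution k y s a b d u)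
    (hφ : ∀ x ∈ s, HasDerivAt φ (k x)⁻¹ x) (hk : ContinuousOn k s) (hk₀ : ∀ x ∈ s, k x ≠ 0)
    (hy : IntervalIntegrable y volume a b) :
    φ (u b) - φ d = ∫ t in a..b, y t := by
  have hint : IntervalIntegrable (fun ξ => k (u ξ) * y ξ) volume a b :=
    hy.continuousOn_mul (hk.comp hu.continuousOn hu.mapsTo)
  -- `u` is only known on `[a, b]`, but `deriv` at the endpoints looks outside: extend it by `U`.
  set U : ℝ → ℝ := fun t => d + ∫ ξ in a..t, k (u ξ) * y ξ with hU
  have hUu : EqOn U u (uIcc a b) := fun t ht => (hu.eq_add_integral t ht).symm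
  have hUs : U '' uIcc a b ⊆ s := (hu.mapsTo.congr hUu.symm).image_subset
  have hUac : AbsolutelyContinuousOnInterval U a b :=
    (LipschitzWith.const d).lipschitzOnWith.absolutelyContinuousOnInterval.fun_add
      (hint.absolutelyContinuousOnInterval_intervalIntegral left_mem_uIcc)
  have hUa : U a = d := by simp [hU]
  rw [← hUu right_mem_uIcc, ← hUa,
    ← integral_comp_mul_deriv_of_absolutelyContinuousOnInterval hUac
      (fun x hx => hφ x (hUs hx)) ((hk.inv₀ hk₀).mono hUs)]
  refine intervalIntegral.integral_congr_ae ?_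
  filter_upwards [hint.ae_hasDerivAt_integral] with t hderiv ht
  have ht' := uIoc_subset_uIcc ht
  rw [((hderiv ht' a left_mem_uIcc).const_add d).deriv, hUu ht',
    inv_mul_cancel_left₀ (hk₀ _ (hu.mapsTo ht'))]

theorem abs_sub_le (hu₁ : IsSeparableSolution k y₁ s a b d₁ u₁)
    (hu₂ : IsSeparableSolution k y₂ s a b d₂ u₂) (hs : Convex ℝ s)
    (hφ : ∀ x ∈ s, HasDerivAt φ (k x)⁻¹ x) (hk : ContinuousOn k s)
    (hm : 0 < m) (hkmL : ∀ x ∈ s, (k x)⁻¹ ∈ Icc m L)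
    (hy₁ : IntervalIntegrable y₁ volume a b) (hy₂ : IntervalIntegrable y₂ volume a b) :
    |u₁ b - u₂ b| ≤ m⁻¹ * (L * |d₁ - d₂| + |∫ t in a..b, (y₁ t - y₂ t)|) := by
  have hpos : ∀ x ∈ s, 0 < (k x)⁻¹ := fun x hx => hm.trans_le (hkmL x hx).1
  have hk₀ : ∀ x ∈ s, k x ≠ 0 := fun x hx => (inv_pos.1 (hpos x hx)).ne'
  obtain ⟨v, hv, hφu⟩ := exists_mem_image_sub_eq_mul_of_hasDerivAt hs hφ
    (hu₁.mapsTo right_mem_uIcc) (hu₂.mapsTo right_mem_uIcc)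
  obtain ⟨w, hw, hφd⟩ := exists_mem_image_sub_eq_mul_of_hasDerivAt hs hφ
    hu₁.initial_mem hu₂.initial_mem
  rw [inv_mul_eq_div, le_div_iff₀' hm]
  calc m * |u₁ b - u₂ b| ≤ (k v)⁻¹ * |u₁ b - u₂ b| := by gcongr; exact (hkmL v hv).1
    _ = |φ (u₁ b) - φ (u₂ b)| := by rw [hφu, abs_mul, abs_of_pos (hpos v hv)]
    _ = |(φ d₁ - φ d₂) + ∫ t in a..b, (y₁ t - y₂ t)| := by
      rw [intervalIntegral.integral_sub hy₁ hy₂,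
        ← hu₁.antideriv_sub_eq_integral hφ hk hk₀ hy₁,
        ← hu₂.antideriv_sub_eq_integral hφ hk hk₀ hy₂]
      ring_nf
    _ ≤ |φ d₁ - φ d₂| + |∫ t in a..b, (y₁ t - y₂ t)| := abs_add_le _ _
    _ = (k w)⁻¹ * |d₁ - d₂| + |∫ t in a..b, (y₁ t - y₂ t)| := by
      rw [hφd, abs_mul, abs_of_pos (hpos w hw)]
    _ ≤ L * |d₁ - d₂| + |∫ t in a..b, (y₁ t - y₂ t)| := by gcongr; exact (hkmL w hw).2

end IsSeparableSolution

theorem rpow_abs_le_rpow {p q : ℝ} (a : ℝ) (hq : 0 < q) (hqp : q ≤ p) (hp : p ≤ 1) :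
    q ^ |a| ≤ p ^ a :=
  (Real.rpow_le_rpow hq.le hqp (abs_nonneg a)).trans
    (Real.rpow_le_rpow_of_exponent_ge (hq.trans_le hqp) hp (le_abs_self a))

theorem rpow_mem_Icc_rpow_abs {p q : ℝ} (a : ℝ) (hq : 0 < q) (hqp : q ≤ p) (hp : p ≤ 1) :
    p ^ a ∈ Icc (q ^ |a|) (q ^ |a|)⁻¹ := by
  have hp₀ := hq.trans_le hqp
  refine ⟨rpow_abs_le_rpow a hq hqp hp, ?_⟩
  rw [le_inv_comm₀ (Real.rpow_pos_of_pos hp₀ a) (Real.rpow_pos_of_pos hq _),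
    ← Real.rpow_neg hp₀.le, ← abs_neg]
  exact rpow_abs_le_rpow (-a) hq hqp hp

theorem continuousOn_one_sub_rpow (a : ℝ) : ContinuousOn (fun x : ℝ => (1 - x) ^ a) (Iio 1) :=
  (continuousOn_const.sub continuousOn_id).rpow_const fun _ hx => .inl (sub_pos.2 hx).ne'

theorem hasDerivAt_integral_one_sub_rpow (a : ℝ) {x : ℝ} (hx : x < 1) :
    HasDerivAt (fun z => ∫ s in (0 : ℝ)..z, (1 - s) ^ a) ((1 - x) ^ a) x := by
  have hcont := continuousOn_one_sub_rpow a
  refine intervalIntegral.integral_hasDerivAt_right ?_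
    (hcont.stronglyMeasurableAtFilter isOpen_Iio x hx) (hcont.continuousAt (Iio_mem_nhds hx))
  exact (hcont.mono fun s hs => hs.2.trans_lt (max_lt one_pos hx)).intervalIntegrable

theorem intervalIntegral_le_sub_mul_essSup {f : ℝ → ℝ} {a b : ℝ} (hab : a ≤ b)
    (hf : IntegrableOn f (Icc a b))
    (hbdd : IsBoundedUnder (· ≤ ·) (ae (volume.restrict (Icc a b))) f) :
    ∫ t in a..b, f t ≤ (b - a) * essSup f (volume.restrict (Icc a b)) := by
  rw [intervalIntegral.integral_of_le hab, ← integral_Icc_eq_integral_Ioc]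
  calc ∫ t in Icc a b, f t
      ≤ ∫ _ in Icc a b, essSup f (volume.restrict (Icc a b)) :=
        integral_mono_ae hf (integrable_const _) (ae_le_essSup hbdd)
    _ = (b - a) * essSup f (volume.restrict (Icc a b)) := by simp [hab]

namespace AdmissibleSource

variable {T a w0 w1 : ℝ} {y y1 y2 : ℝ → ℝ}

theorem integrableOn (hy : AdmissibleSource T a w0 w1 y) : IntegrableOn y (Icc 0 T) := by
  refine Measure.integrableOn_of_bounded (by simp) hy.1.aestronglyMeasurable
    (M := T⁻¹ * (w1 - w0) * (1 - w1) ^ a) ?_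
  filter_upwards [hy.2] with t ht
  rw [Real.norm_of_nonneg ht.1]
  exact ht.2

theorem isBoundedUnder_abs_sub (hy1 : AdmissibleSource T a w0 w1 y1)
    (hy2 : AdmissibleSource T a w0 w1 y2) :
    IsBoundedUnder (· ≤ ·) (ae (volume.restrict (Icc 0 T))) fun t => |y1 t - y2 t| := by
  refine isBoundedUnder_of_eventually_le (a := T⁻¹ * (w1 - w0) * (1 - w1) ^ a) ?_
  filter_upwards [hy1.2, hy2.2] with t h1 h2
  exact abs_sub_le_iff.2 ⟨by linarith, by linarith⟩

end AdmissibleSource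

namespace SolvesDamage

variable {T a w1 d d1 d2 t : ℝ} {y y1 y2 u u1 u2 : ℝ → ℝ}

theorem isSeparableSolution (hu : SolvesDamage T a w1 d y u) (ht : t ∈ Icc 0 T) :
    IsSeparableSolution (fun x => (1 - x) ^ (-a)) y (Icc 0 w1) 0 t d u := by
  have hsub : uIcc 0 t ⊆ Icc 0 T := uIcc_of_le ht.1 ▸ Icc_subset_Icc_right ht.2
  exact ⟨hu.1.mono hsub, fun ξ hξ => hu.2.1 ξ (hsub hξ), fun ξ hξ => hu.2.2 ξ (hsub hξ)⟩

theorem abs_sub_le (hu1 : SolvesDamage T a w1 d1 y1 u1) (hu2 : SolvesDamage T a w1 d2 y2 u2)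
    (hw1 : w1 < 1) (hy1 : IntegrableOn y1 (Icc 0 T)) (hy2 : IntegrableOn y2 (Icc 0 T))
    (ht : t ∈ Icc 0 T) :
    |u1 t - u2 t| ≤ ((1 - w1) ^ |a|)⁻¹ *
      (((1 - w1) ^ |a|)⁻¹ * |d1 - d2| + |∫ ξ in (0 : ℝ)..t, (y1 ξ - y2 ξ)|) := by
  have hq : 0 < 1 - w1 := sub_pos.2 hw1
  have hinv : ∀ x ∈ Icc 0 w1, ((1 - x) ^ (-a))⁻¹ = (1 - x) ^ a := fun x hx => by
    rw [Real.rpow_neg (by linarith [hx.2]), inv_inv]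
  have hφ : ∀ x ∈ Icc 0 w1,
      HasDerivAt (fun z => ∫ s in (0 : ℝ)..z, (1 - s) ^ a) ((1 - x) ^ (-a))⁻¹ x := fun x hx => by
    rw [hinv x hx]
    exact hasDerivAt_integral_one_sub_rpow a (hx.2.trans_lt hw1)
  have hbounds : ∀ x ∈ Icc 0 w1,
      ((1 - x) ^ (-a))⁻¹ ∈ Icc ((1 - w1) ^ |a|) ((1 - w1) ^ |a|)⁻¹ := fun x hx => by
    rw [hinv x hx]
    exact rpow_mem_Icc_rpow_abs a hq (by linarith [hx.2]) (by linarith [hx.1])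
  have hcont : ContinuousOn (fun x : ℝ => (1 - x) ^ (-a)) (Icc 0 w1) :=
    (continuousOn_one_sub_rpow (-a)).mono fun x hx => hx.2.trans_lt hw1
  have hsub : uIcc 0 t ⊆ Icc 0 T := uIcc_of_le ht.1 ▸ Icc_subset_Icc_right ht.2
  exact (hu1.isSeparableSolution ht).abs_sub_le (hu2.isSeparableSolution ht) (convex_Icc 0 w1)
    hφ hcont (Real.rpow_pos_of_pos hq _) hbounds
    (hy1.mono_set hsub).intervalIntegrable (hy2.mono_set hsub).intervalIntegrable

end SolvesDamage

theorem damage_solution_continuous_dependence_general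
    (T a w1 : ℝ) (hT : 0 < T) (hw1 : w1 < 1) :
    ∃ c > (0 : ℝ), ∀ d10 d20 : ℝ, ∀ y1 y2 : ℝ → ℝ,
      IntegrableOn y1 (Icc 0 T) → IntegrableOn y2 (Icc 0 T) →
      IsBoundedUnder (· ≤ ·) (ae (volume.restrict (Icc 0 T))) (fun t => |y1 t - y2 t|) →
      ∀ u1 u2 : ℝ → ℝ, SolvesDamage T a w1 d10 y1 u1 → SolvesDamage T a w1 d20 y2 u2 →
      sSup ((fun t => |u1 t - u2 t|) '' Icc (0 : ℝ) T) ≤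
        c * (|d10 - d20| +
          essSup (fun t => |y1 t - y2 t|) (volume.restrict (Icc (0 : ℝ) T))) := by
  set K := ((1 - w1) ^ |a|)⁻¹
  have hK : 0 < K := inv_pos.2 (Real.rpow_pos_of_pos (sub_pos.2 hw1) _)
  refine ⟨K * (K + T), by positivity, fun d10 d20 y1 y2 hy1 hy2 hbdd u1 u2 hu1 hu2 => ?_⟩
  set E := essSup (fun t => |y1 t - y2 t|) (volume.restrict (Icc (0 : ℝ) T))
  have habs : IntervalIntegrable (fun ξ => |y1 ξ - y2 ξ|) volume 0 T :=
    ((intervalIntegrable_iff_integrableOn_Icc_of_le hT.le).2 (hy1.sub hy2)).abs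
  have hTE : ∫ ξ in (0 : ℝ)..T, |y1 ξ - y2 ξ| ≤ T * E := by
    simpa using intervalIntegral_le_sub_mul_essSup hT.le (hy1.sub hy2).abs hbdd
  have hE : 0 ≤ E := nonneg_of_mul_nonneg_right
    ((intervalIntegral.integral_nonneg hT.le fun _ _ => abs_nonneg _).trans hTE) hT
  refine csSup_le ((nonempty_Icc.2 hT.le).image _) (forall_mem_image.2 fun t ht => ?_)
  have hint : |∫ ξ in (0 : ℝ)..t, (y1 ξ - y2 ξ)| ≤ T * E :=
    calc |∫ ξ in (0 : ℝ)..t, (y1 ξ - y2 ξ)|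
        ≤ ∫ ξ in (0 : ℝ)..t, |y1 ξ - y2 ξ| := intervalIntegral.abs_integral_le_integral_abs ht.1
      _ ≤ ∫ ξ in (0 : ℝ)..T, |y1 ξ - y2 ξ| :=
        intervalIntegral.integral_mono_interval le_rfl ht.1 ht.2
          (.of_forall fun _ => abs_nonneg _) habs
      _ ≤ T * E := hTE
  calc |u1 t - u2 t| ≤ K * (K * |d10 - d20| + |∫ ξ in (0 : ℝ)..t, (y1 ξ - y2 ξ)|) :=
        hu1.abs_sub_le hu2 hw1 hy1 hy2 ht
    _ ≤ K * (K * |d10 - d20| + T * E) := by gcongr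
    _ ≤ K * ((K + T) * |d10 - d20| + (K + T) * E) := by gcongr <;> linarith
    _ = K * (K + T) * (|d10 - d20| + E) := by ring

/-- Lipschitz continuous dependence of the solution of the damage integral
equation on the initial value and the source. -/
theorem damage_solution_continuous_dependence
    (T a w0 w1 : ℝ) (hT : 0 < T) (ha : 1 ≤ a)
    (hw0 : 0 ≤ w0) (hw01 : w0 ≤ w1) (hw1 : w1 < 1) :
    ∃ c > (0 : ℝ), ∀ d10 ∈ Icc (0 : ℝ) w0, ∀ d20 ∈ Icc (0 : ℝ) w0,
      ∀ y1 y2 : ℝ → ℝ, AdmissibleSource T a w0 w1 y1 → AdmissibleSource T a w0 w1 y2 →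
      ∀ u1 u2 : ℝ → ℝ, SolvesDamage T a w1 d10 y1 u1 → SolvesDamage T a w1 d20 y2 u2 →
      sSup ((fun t => |u1 t - u2 t|) '' Icc (0 : ℝ) T) ≤
        c * (|d10 - d20| +
          essSup (fun t => |y1 t - y2 t|) (volume.restrict (Icc (0 : ℝ) T))) := by
  obtain ⟨c, hc, h⟩ := damage_solution_continuous_dependence_general T a w1 hT hw1
  exact ⟨c, hc, fun d10 _ d20 _ y1 y2 hy1 hy2 => h d10 d20 y1 y2 hy1.integrableOn
    hy2.integrableOn (hy1.isBoundedUnder_abs_sub hy2)⟩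
end

section
/- There exists a constant c > 0, depending only on T, α, ω₀ and ω₁, with the following property: if y₁ and y₂ are continuous admissible sources, d₁₀, d₂₀ ∈ [0, ω₀], and ω₁, ω₂ are the corresponding solutions of the damage integral equation, then the derivatives satisfy |ω₁'(t) − ω₂'(t)| ≤ c·( |ω₁(t) − ω₂(t)| + max_{s∈[0,T]} |y₁(s) − y₂(s)| ) for every t ∈ [0,T]. -/
/-!
The derivative of a solution is a fixed function of the point `(ω(t), y(t))`, namely
`(x, y) ↦ (1 - x) ^ (-α) * y`, which is smooth off the line `x = 1`. Solutions and sources take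
their values in the compact rectangle `[0, ω₁] × [0, M]`, disjoint from that line since `ω₁ < 1`,
and there a smooth function is Lipschitz. The source bounds, given almost everywhere, hold
everywhere on `[0, T]` because the source is continuous and `[0, T]` is the closure of its
interior.
-/

open MeasureTheory Set

/-- The right-hand side of the damage equation `ω' = (1 - ω) ^ (-a) * y`, as a function of the pair
`(ω, y)`, so that its regularity in both arguments can be used jointly. -/
noncomputable def damageRate (a : ℝ) (p : ℝ × ℝ) : ℝ :=
  (1 - p.1) ^ (-a) * p.2

theorem contDiffAt_damageRate (a : ℝ) {n : WithTop ℕ∞} {p : ℝ × ℝ} (hp : p.1 ≠ 1) :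
    ContDiffAt ℝ n (damageRate a) p :=
  ((contDiffAt_const.sub contDiffAt_fst).rpow_const_of_ne (sub_ne_zero.2 hp.symm)).mul
    contDiffAt_snd

theorem locallyLipschitzOn_damageRate (a : ℝ) :
    LocallyLipschitzOn {p : ℝ × ℝ | p.1 ≠ 1} (damageRate a) := by
  intro p hp
  obtain ⟨K, s, hs, hK⟩ := (contDiffAt_damageRate a hp).exists_lipschitzOnWith
  exact ⟨K, s, mem_nhdsWithin_of_mem_nhds hs, hK⟩

theorem exists_pos_abs_damageRate_sub_le (a : ℝ) {s : Set (ℝ × ℝ)} (hs : IsCompact s)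
    (hs_ne : ∀ p ∈ s, p.1 ≠ 1) :
    ∃ c > 0, ∀ p ∈ s, ∀ q ∈ s,
      |damageRate a p - damageRate a q| ≤ c * (|p.1 - q.1| + |p.2 - q.2|) := by
  obtain ⟨K, hK⟩ :=
    ((locallyLipschitzOn_damageRate a).mono hs_ne).exists_lipschitzOnWith_of_compact hs
  refine ⟨K + 1, by positivity, fun p hp q hq => ?_⟩
  calc |damageRate a p - damageRate a q|
      ≤ K * max |p.1 - q.1| |p.2 - q.2| := hK.dist_le_mul p hp q hq
    _ ≤ (K + 1) * (|p.1 - q.1| + |p.2 - q.2|) := by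
      gcongr
      · exact le_add_of_nonneg_right zero_le_one
      · exact max_le_add_of_nonneg (abs_nonneg _) (abs_nonneg _)

theorem mapsTo_of_ae_mem_of_isClosed {X Y : Type*} [TopologicalSpace X] [MeasurableSpace X]
    [TopologicalSpace Y] {μ : Measure X} [μ.IsOpenPosMeasure] {f : X → Y} {s : Set X} {C : Set Y}
    (hC : IsClosed C) (hf : ContinuousOn f s) (hs : s ⊆ closure (interior s))
    (h : ∀ᵐ x ∂μ.restrict s, f x ∈ C) : MapsTo f s C := by
  have hf_int : ContinuousOn f (interior s) := hf.mono interior_subset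
  have bad_open : IsOpen (interior s ∩ f ⁻¹' Cᶜ) :=
    hf_int.isOpen_inter_preimage isOpen_interior hC.isOpen_compl
  have bad_null : μ (interior s ∩ f ⁻¹' Cᶜ) = 0 := by
    refine measure_mono_null ?_ (ae_imp_of_ae_restrict h)
    exact fun x hx hmem => hx.2 (hmem (interior_subset hx.1))
  have mapsTo_interior : MapsTo f (interior s) C := fun x hx => by
    by_contra hxC
    exact (bad_open.eq_empty_of_measure_zero bad_null).le ⟨hx, hxC⟩
  intro x hx
  rw [← hC.closure_eq]
  exact ((hf x hx).mono interior_subset).mem_closure (hs hx) mapsTo_interior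

theorem AdmissibleSource.mapsTo_Icc {T a w0 w1 : ℝ} {y : ℝ → ℝ} (hT : T ≠ 0)
    (h : AdmissibleSource T a w0 w1 y) (hy : ContinuousOn y (Icc 0 T)) :
    MapsTo y (Icc 0 T) (Icc 0 (T⁻¹ * (w1 - w0) * (1 - w1) ^ a)) :=
  mapsTo_of_ae_mem_of_isClosed isClosed_Icc hy (closure_interior_Icc hT.symm).ge h.2

theorem damage_solution_derivative_estimate_general
    (T a w0 w1 : ℝ) (hT : 0 < T) (hw1 : w1 < 1) :
    ∃ c > (0 : ℝ),
      ∀ y1 y2 : ℝ → ℝ, AdmissibleSource T a w0 w1 y1 → AdmissibleSource T a w0 w1 y2 →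
      ContinuousOn y1 (Icc (0 : ℝ) T) → ContinuousOn y2 (Icc (0 : ℝ) T) →
      ∀ d10 d20 : ℝ,
      ∀ u1 u2 : ℝ → ℝ, SolvesDamage T a w1 d10 y1 u1 → SolvesDamage T a w1 d20 y2 u2 →
      ∀ t ∈ Icc (0 : ℝ) T,
        |(1 - u1 t) ^ (-a) * y1 t - (1 - u2 t) ^ (-a) * y2 t| ≤
          c * (|u1 t - u2 t| + sSup ((fun s => |y1 s - y2 s|) '' Icc (0 : ℝ) T)) := by
  obtain ⟨c, hc, rate_le⟩ := exists_pos_abs_damageRate_sub_le a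
    (s := Icc 0 w1 ×ˢ Icc 0 (T⁻¹ * (w1 - w0) * (1 - w1) ^ a))
    (isCompact_Icc.prod isCompact_Icc) fun _ hp => (hp.1.2.trans_lt hw1).ne
  refine ⟨c, hc, fun y1 y2 hy1 hy2 hy1c hy2c _ _ u1 u2 hu1 hu2 t ht => ?_⟩
  have source_le : |y1 t - y2 t| ≤ sSup ((fun s => |y1 s - y2 s|) '' Icc (0 : ℝ) T) :=
    (hy1c.sub hy2c).abs.le_sSup_image_Icc ht
  calc |(1 - u1 t) ^ (-a) * y1 t - (1 - u2 t) ^ (-a) * y2 t|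
      ≤ c * (|u1 t - u2 t| + |y1 t - y2 t|) :=
        rate_le (u1 t, y1 t) ⟨hu1.2.1 t ht, hy1.mapsTo_Icc hT.ne' hy1c ht⟩
          (u2 t, y2 t) ⟨hu2.2.1 t ht, hy2.mapsTo_Icc hT.ne' hy2c ht⟩
    _ ≤ c * (|u1 t - u2 t| + sSup ((fun s => |y1 s - y2 s|) '' Icc (0 : ℝ) T)) := by
        gcongr

/-- Lipschitz-type estimate for the derivatives of two solutions of the damage
integral equation with continuous sources: `ω'(t) = (1 − ω(t))^(−α) y(t)` and
`|ω₁'(t) − ω₂'(t)| ≤ c(|ω₁(t) − ω₂(t)| + max_s |y₁(s) − y₂(s)|)`. -/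
theorem damage_solution_derivative_estimate
    (T a w0 w1 : ℝ) (hT : 0 < T) (ha : 1 ≤ a)
    (hw0 : 0 ≤ w0) (hw01 : w0 ≤ w1) (hw1 : w1 < 1) :
    ∃ c > (0 : ℝ),
      ∀ y1 y2 : ℝ → ℝ, AdmissibleSource T a w0 w1 y1 → AdmissibleSource T a w0 w1 y2 →
      ContinuousOn y1 (Icc (0 : ℝ) T) → ContinuousOn y2 (Icc (0 : ℝ) T) →
      ∀ d10 ∈ Icc (0 : ℝ) w0, ∀ d20 ∈ Icc (0 : ℝ) w0,
      ∀ u1 u2 : ℝ → ℝ, SolvesDamage T a w1 d10 y1 u1 → SolvesDamage T a w1 d20 y2 u2 →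
      ∀ t ∈ Icc (0 : ℝ) T,
        |(1 - u1 t) ^ (-a) * y1 t - (1 - u2 t) ^ (-a) * y2 t| ≤
          c * (|u1 t - u2 t| + sSup ((fun s => |y1 s - y2 s|) '' Icc (0 : ℝ) T)) := by
  obtain ⟨c, hc, h⟩ := damage_solution_derivative_estimate_general T a w0 w1 hT hw1
  exact ⟨c, hc, fun y1 y2 hy1 hy2 hc1 hc2 d10 _ d20 _ => h y1 y2 hy1 hy2 hc1 hc2 d10 d20⟩
end

section
/- Let Ω ⊆ ℝ^k be a Lebesgue-measurable set, d₀ : Ω → ℝ a measurable function with 0 ≤ d₀(x) ≤ ω₀ for all x ∈ Ω, and y : [0,T] × Ω → ℝ a measurable function with 0 ≤ y(t,x) ≤ M for all (t,x). Then there exists a function d : [0,T] × Ω → ℝ such that: (i) for every x ∈ Ω the function t ↦ d(t,x) is continuous, takes values in [0, ω₁], and satisfies d(t,x) = d₀(x) + ∫₀ᵗ (1 − d(ξ,x))^{−α} y(ξ,x) dξ for all t ∈ [0,T]; (ii) for every t ∈ [0,T] the function x ↦ d(t,x) is measurable; (iii) for every x ∈ Ω and all t₁, t₂ ∈ [0,T]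 one has |d(t₁,x) − d(t₂,x)| ≤ T⁻¹(ω₁ − ω₀)|t₁ − t₂|. Moreover, d is uniquely determined by (i). -/
open MeasureTheory Set

/-!
Damage depends on time only through the accumulated source `Y t = ∫₀ᵗ y`. Since
`((1 - u)^(α+1))' = -(α+1) y` along a solution, separation of variables forces
`(1 - u t)^(α+1) = (1 - u₀)^(α+1) - (α+1) Y t`, which gives uniqueness together with an explicit
formula for the solution; measurability in space is read off that formula. The right-hand side
stays above `(1 - ω₁)^(α+1)`, so that the damage stays below `ω₁`, because
`Y t ≤ (ω₁ - ω₀)(1 - ω₁)^α` and `z ↦ z^(α+1)` lies above its tangent at `1 - ω₁`.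
As `y` is merely integrable, the chain rule needed is the one for absolutely continuous functions.
-/

open scoped NNReal

theorem uIcc_left_subset_Icc {ι : Type*} [Lattice ι] {a b t : ι} (ht : t ∈ Icc a b) :
    uIcc a t ⊆ Icc a b :=
  uIcc_subset_Icc (left_mem_Icc.2 (ht.1.trans ht.2)) ht

section ChainRule

variable {a b : ℝ}

theorem absolutelyContinuousOnInterval_comp_of_lipschitzOnWith_s17 {X Y : Type*}
    [PseudoMetricSpace X] [PseudoMetricSpace Y] {f : ℝ → X} {g : X → Y} {K : ℝ≥0}
    (hg : LipschitzOnWith K g (f '' uIcc a b)) (hf : AbsolutelyContinuousOnInterval f a b) :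
    AbsolutelyContinuousOnInterval (g ∘ f) a b := by
  have hlim := Filter.Tendsto.const_mul (K : ℝ) hf
  rw [mul_zero] at hlim
  refine squeeze_zero' (.of_forall fun E ↦ Finset.sum_nonneg fun _ _ ↦ dist_nonneg) ?_ hlim
  filter_upwards [Filter.mem_inf_of_right (Filter.mem_principal_self _)] with E hE
  rw [Finset.mul_sum]
  exact Finset.sum_le_sum fun i hi ↦ hg.dist_le_mul _ (mem_image_of_mem f (hE.1 i hi).1)
    _ (mem_image_of_mem f (hE.1 i hi).2)

theorem exists_lipschitzOnWith_of_hasDerivWithinAt {𝕜 G : Type*} [RCLike 𝕜]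
    [NormedAddCommGroup G] [NormedSpace 𝕜 G] {g g' : 𝕜 → G} {s : Set 𝕜} (hs : IsCompact s)
    (hconv : Convex ℝ s) (hg : ∀ x ∈ s, HasDerivWithinAt g (g' x) s x)
    (hg' : ContinuousOn g' s) : ∃ K : ℝ≥0, LipschitzOnWith K g s := by
  obtain ⟨K, hK⟩ := hs.exists_bound_of_continuousOn hg'
  exact ⟨K.toNNReal, hconv.lipschitzOnWith_of_nnnorm_hasDerivWithin_le hg
    fun x hx ↦ NNReal.le_toNNReal_of_coe_le (hK x hx)⟩

theorem integral_comp_mul_of_eq_add_integral {g g' u v : ℝ → ℝ}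
    (hv : IntervalIntegrable v volume a b)
    (hu : ∀ t ∈ uIcc a b, u t = u a + ∫ s in a..t, v s)
    (hg : ∀ x ∈ u '' uIcc a b, HasDerivAt g (g' x) x) (hg' : ContinuousOn g' (u '' uIcc a b)) :
    ∫ s in a..b, g' (u s) * v s = g (u b) - g (u a) := by
  set U : ℝ → ℝ := fun t ↦ u a + ∫ s in a..t, v s
  have hUac : AbsolutelyContinuousOnInterval U a b := by
    have hconst := (LipschitzWith.const (u a)).lipschitzOnWith (s := uIcc a b)
    exact hconst.absolutelyContinuousOnInterval.fun_add
      (hv.absolutelyContinuousOnInterval_intervalIntegral left_mem_uIcc)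
  have himage : u '' uIcc a b = U '' uIcc a b := image_congr hu
  have hconv : Convex ℝ (U '' uIcc a b) :=
    (isPreconnected_uIcc.image U hUac.continuousOn).convex
  rw [himage] at hg hg'
  obtain ⟨K, hK⟩ := exists_lipschitzOnWith_of_hasDerivWithinAt
    (isCompact_uIcc.image_of_continuousOn hUac.continuousOn) hconv
    (fun x hx ↦ (hg x hx).hasDerivWithinAt) hg'
  have hgUac := absolutelyContinuousOnInterval_comp_of_lipschitzOnWith_s17 hK hUac
  have hftc := hgUac.integral_deriv_eq_sub
  simp only [Function.comp_apply, U, ← hu b right_mem_uIcc, ← hu a left_mem_uIcc] at hftc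
  rw [← hftc]
  refine intervalIntegral.integral_congr_ae ?_
  filter_upwards [hv.ae_hasDerivAt_integral] with t ht htab
  have ht' := uIoc_subset_uIcc htab
  rw [hu t ht']
  have hU : HasDerivAt U (v t) t := (ht ht' a left_mem_uIcc).const_add (u a)
  exact ((hg _ (mem_image_of_mem U ht')).comp t hU).deriv.symm

end ChainRule

section SubtypeMeasurability

variable {E : Type*} [NormedAddCommGroup E] {a b : ℝ}

theorem intervalIntegrable_of_stronglyMeasurable_subtype {f : ℝ → E} {C : ℝ} (hab : a ≤ b)
    (hf : StronglyMeasurable fun t : Icc a b ↦ f t) (hC : ∀ t ∈ Icc a b, ‖f t‖ ≤ C) :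
    IntervalIntegrable f volume a b := by
  rw [intervalIntegrable_iff_integrableOn_Icc_of_le hab,
    integrableOn_iff_comap_subtypeVal measurableSet_Icc]
  have : IsFiniteMeasure (Measure.comap ((↑) : Icc a b → ℝ) volume) :=
    ⟨by
      rw [(MeasurableEmbedding.subtype_coe measurableSet_Icc).comap_apply, image_univ,
        Subtype.range_coe]
      exact measure_Icc_lt_top⟩
  exact .of_bound hf.aestronglyMeasurable C (ae_of_all _ fun t ↦ hC t t.2)

theorem stronglyMeasurable_intervalIntegral_of_prod_subtype [NormedSpace ℝ E] {X : Type*}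
    [MeasurableSpace X] {f : ℝ → X → E} {t : ℝ}
    (hf : StronglyMeasurable fun p : Icc a b × X ↦ f p.1 p.2) (ht : t ∈ Icc a b) :
    StronglyMeasurable fun x ↦ ∫ s in a..t, f s x := by
  have hab : a ≤ b := ht.1.trans ht.2
  have hext : StronglyMeasurable fun p : X × ℝ ↦ f (projIcc a b hab p.2) p.1 :=
    hf.comp_measurable
      (((continuous_projIcc (h := hab)).measurable.comp measurable_snd).prodMk measurable_fst)
  have hcongr (x : X) : ∫ s in a..t, f s x = ∫ s in Ioc a t, f (projIcc a b hab s) x := by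
    rw [intervalIntegral.integral_of_le ht.1]
    refine setIntegral_congr_fun measurableSet_Ioc fun s hs ↦ ?_
    simp only [projIcc_of_mem hab ⟨hs.1.le, hs.2.trans ht.2⟩]
  simp only [hcongr]
  exact hext.integral_prod_right'

end SubtypeMeasurability

theorem rpow_add_one_add_tangent_le {a x z : ℝ} (ha : 0 ≤ a) (hx : 0 < x) (hz : 0 ≤ z) :
    x ^ (a + 1) + (a + 1) * (x ^ a * (z - x)) ≤ z ^ (a + 1) := by
  have hratio : 1 + (z - x) / x = z / x := by field_simp; ring
  have hbernoulli := one_add_mul_self_le_rpow_one_add (s := (z - x) / x) (p := a + 1)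
    (by linarith [div_nonneg hz hx.le]) (by linarith)
  rw [hratio, Real.div_rpow hz hx.le, le_div_iff₀ (by positivity)] at hbernoulli
  calc x ^ (a + 1) + (a + 1) * (x ^ a * (z - x))
      = (1 + (a + 1) * ((z - x) / x)) * x ^ (a + 1) := by
        rw [Real.rpow_add_one hx.ne']; field_simp
    _ ≤ z ^ (a + 1) := hbernoulli

/-- The damage reached from the initial damage `u₀` once the accumulated source `∫ y` equals `Y`:
the solution of `dD/dY = (1 - D)^(-a)`, `D(0) = u₀`. It is meaningful as long as the base of the
outer power is nonnegative. -/
noncomputable def damageProfile (a u₀ Y : ℝ) : ℝ :=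
  1 - ((1 - u₀) ^ (a + 1) - (a + 1) * Y) ^ (a + 1)⁻¹

section damageProfile

variable {a w u₀ Y : ℝ}

theorem damageProfile_zero (ha : a + 1 ≠ 0) (hu₀ : u₀ ≤ 1) : damageProfile a u₀ 0 = u₀ := by
  simp [damageProfile, Real.rpow_rpow_inv (sub_nonneg.2 hu₀) ha]

theorem hasDerivAt_damageProfile (ha : a + 1 ≠ 0) (hY : (a + 1) * Y < (1 - u₀) ^ (a + 1)) :
    HasDerivAt (damageProfile a u₀) ((1 - damageProfile a u₀ Y) ^ (-a)) Y := by
  have hbase : 0 < (1 - u₀) ^ (a + 1) - (a + 1) * Y := sub_pos.2 hY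
  have hexp : (a + 1)⁻¹ - 1 = (a + 1)⁻¹ * -a := by field_simp; ring
  have hderiv := ((((hasDerivAt_id Y).const_mul (a + 1)).const_sub
    ((1 - u₀) ^ (a + 1))).rpow_const (p := (a + 1)⁻¹) (.inl hbase.ne')).const_sub 1
  refine hderiv.congr_deriv ?_
  rw [damageProfile, sub_sub_cancel, ← Real.rpow_mul hbase.le, ← hexp]
  simp only [id]
  field_simp

theorem damageProfile_mem_Icc (ha : 0 < a + 1) (hw : w ≤ 1) (hu₀ : u₀ ∈ Icc 0 1) (hY₀ : 0 ≤ Y)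
    (hY : (a + 1) * Y ≤ (1 - u₀) ^ (a + 1) - (1 - w) ^ (a + 1)) :
    damageProfile a u₀ Y ∈ Icc 0 w := by
  have hlow : (1 - w) ^ (a + 1) ≤ (1 - u₀) ^ (a + 1) - (a + 1) * Y := by linarith
  have hnonneg : 0 ≤ (1 - w) ^ (a + 1) := Real.rpow_nonneg (sub_nonneg.2 hw) _
  have hinit : (1 - u₀) ^ (a + 1) ≤ 1 :=
    Real.rpow_le_one (sub_nonneg.2 hu₀.2) (sub_le_self _ hu₀.1) ha.le
  have hhigh : (1 - u₀) ^ (a + 1) - (a + 1) * Y ≤ 1 := by nlinarith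
  refine ⟨sub_nonneg.2 (Real.rpow_le_one (hnonneg.trans hlow) hhigh (inv_nonneg.2 ha.le)),
    sub_le_comm.1 ?_⟩
  calc 1 - w = ((1 - w) ^ (a + 1)) ^ (a + 1)⁻¹ :=
        (Real.rpow_rpow_inv (sub_nonneg.2 hw) ha.ne').symm
    _ ≤ ((1 - u₀) ^ (a + 1) - (a + 1) * Y) ^ (a + 1)⁻¹ :=
        Real.rpow_le_rpow hnonneg hlow (inv_nonneg.2 ha.le)

theorem measurable_damageProfile {X : Type*} [MeasurableSpace X] {f g : X → ℝ}
    (hf : Measurable f) (hg : Measurable g) : Measurable fun x ↦ damageProfile a (f x) (g x) := by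
  unfold damageProfile
  fun_prop

end damageProfile

/-- `u` is a continuous solution on `[0, T]`, with values in `[0, w]`, of the damage evolution
`u' = (1 - u)^(-a) y`, `u(0) = u₀` at one point of space, in integral form. -/
def IsDamageSolution (a w T u₀ : ℝ) (y u : ℝ → ℝ) : Prop :=
  ContinuousOn u (Icc 0 T) ∧ (∀ t ∈ Icc 0 T, u t ∈ Icc 0 w) ∧
    ∀ t ∈ Icc 0 T, u t = u₀ + ∫ s in 0..t, (1 - u s) ^ (-a) * y s

section DamageSolution

variable {a w T u₀ M : ℝ} {y u : ℝ → ℝ}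

namespace IsDamageSolution

theorem apply_zero (h : IsDamageSolution a w T u₀ y u) (hT : 0 ≤ T) : u 0 = u₀ := by
  simpa using h.2.2 0 ⟨le_rfl, hT⟩

theorem one_sub_pos (h : IsDamageSolution a w T u₀ y u) (hw : w < 1) {t : ℝ} (ht : t ∈ Icc 0 T) :
    0 < 1 - u t :=
  sub_pos.2 ((h.2.1 t ht).2.trans_lt hw)

theorem intervalIntegrable_rate (h : IsDamageSolution a w T u₀ y u) (hw : w < 1)
    (hy : IntervalIntegrable y volume 0 T) {t : ℝ} (ht : t ∈ Icc 0 T) :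
    IntervalIntegrable (fun s ↦ (1 - u s) ^ (-a) * y s) volume 0 t := by
  have hsub := uIcc_left_subset_Icc ht
  have hyt : IntervalIntegrable y volume 0 t := hy.mono_set (hsub.trans Icc_subset_uIcc)
  exact hyt.continuousOn_mul ((continuousOn_const.sub (h.1.mono hsub)).rpow_const
    fun s hs ↦ .inl (h.one_sub_pos hw (hsub hs)).ne')

theorem one_sub_rpow_eq (h : IsDamageSolution a w T u₀ y u) (hw : w < 1)
    (hy : IntervalIntegrable y volume 0 T) {t : ℝ} (ht : t ∈ Icc 0 T) :
    (1 - u t) ^ (a + 1) = (1 - u₀) ^ (a + 1) - (a + 1) * ∫ s in 0..t, y s := by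
  have hsub := uIcc_left_subset_Icc ht
  have hu₀ : u 0 = u₀ := h.apply_zero (ht.1.trans ht.2)
  have hpos : ∀ x ∈ u '' uIcc 0 t, 0 < 1 - x :=
    forall_mem_image.2 fun s hs ↦ h.one_sub_pos hw (hsub hs)
  have hchain := integral_comp_mul_of_eq_add_integral (u := u)
    (g := fun x ↦ (1 - x) ^ (a + 1)) (g' := fun x ↦ -1 * (a + 1) * (1 - x) ^ (a + 1 - 1))
    (h.intervalIntegrable_rate hw hy ht)
    (fun s hs ↦ hu₀.symm ▸ h.2.2 s (hsub hs))
    (fun x hx ↦ ((hasDerivAt_id x).const_sub 1).rpow_const (.inl (hpos x hx).ne'))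
    (continuousOn_const.mul ((continuousOn_const.sub continuousOn_id).rpow_const
      fun x hx ↦ .inl (hpos x hx).ne'))
  have hcancel : ∫ s in 0..t, -1 * (a + 1) * (1 - u s) ^ (a + 1 - 1) * ((1 - u s) ^ (-a) * y s)
      = ∫ s in 0..t, -(a + 1) * y s := by
    refine intervalIntegral.integral_congr fun s hs ↦ ?_
    have hinv : (1 - u s) ^ a * (1 - u s) ^ (-a) = 1 := by
      rw [← Real.rpow_add (h.one_sub_pos hw (hsub hs)), add_neg_cancel, Real.rpow_zero]
    simp only [add_sub_cancel_right]
    linear_combination -(a + 1) * y s * hinv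
  rw [hcancel, intervalIntegral.integral_const_mul, hu₀] at hchain
  linear_combination -hchain

theorem eq_damageProfile (h : IsDamageSolution a w T u₀ y u) (ha : a + 1 ≠ 0) (hw : w < 1)
    (hy : IntervalIntegrable y volume 0 T) {t : ℝ} (ht : t ∈ Icc 0 T) :
    u t = damageProfile a u₀ (∫ s in 0..t, y s) := by
  rw [damageProfile, ← h.one_sub_rpow_eq hw hy ht,
    Real.rpow_rpow_inv (h.one_sub_pos hw ht).le ha, sub_sub_cancel]

theorem abs_sub_le (h : IsDamageSolution a w T u₀ y u) (ha : 0 ≤ a) (hw : w < 1)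
    (hy : IntervalIntegrable y volume 0 T) (hyM : ∀ t ∈ Icc 0 T, |y t| ≤ M) {t₁ t₂ : ℝ}
    (h₁ : t₁ ∈ Icc 0 T) (h₂ : t₂ ∈ Icc 0 T) :
    |u t₁ - u t₂| ≤ (1 - w) ^ (-a) * M * |t₁ - t₂| := by
  have hint {t : ℝ} (ht : t ∈ Icc 0 T) := h.intervalIntegrable_rate hw hy ht
  rw [h.2.2 t₁ h₁, h.2.2 t₂ h₂, add_sub_add_left_eq_sub,
    intervalIntegral.integral_interval_sub_left (hint h₁) (hint h₂)]
  refine intervalIntegral.norm_integral_le_of_norm_le_const (E := ℝ) fun s hs ↦ ?_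
  have hsT : s ∈ Icc 0 T := uIcc_subset_Icc h₂ h₁ (uIoc_subset_uIcc hs)
  have hrate : (1 - u s) ^ (-a) ≤ (1 - w) ^ (-a) :=
    Real.rpow_le_rpow_of_nonpos (sub_pos.2 hw) (sub_le_sub_left (h.2.1 s hsT).2 1)
      (neg_nonpos.2 ha)
  rw [Real.norm_eq_abs, abs_mul, abs_of_nonneg (Real.rpow_nonneg (h.one_sub_pos hw hsT).le _)]
  exact mul_le_mul hrate (hyM s hsT) (abs_nonneg _) (Real.rpow_nonneg (sub_pos.2 hw).le _)

end IsDamageSolution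

theorem isDamageSolution_damageProfile (ha : 0 < a + 1) (hw : w < 1) (hu₀ : u₀ ∈ Icc 0 1)
    (hy : IntervalIntegrable y volume 0 T) (hy₀ : ∀ t ∈ Icc 0 T, 0 ≤ y t)
    (hyT : (a + 1) * ∫ s in 0..T, y s ≤ (1 - u₀) ^ (a + 1) - (1 - w) ^ (a + 1)) :
    IsDamageSolution a w T u₀ y fun t ↦ damageProfile a u₀ (∫ s in 0..t, y s) := by
  set Y : ℝ → ℝ := fun t ↦ ∫ s in 0..t, y s
  have hY₀ : Y 0 = 0 := intervalIntegral.integral_same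
  have hYbound : ∀ t ∈ Icc 0 T, 0 ≤ Y t ∧
      (a + 1) * Y t ≤ (1 - u₀) ^ (a + 1) - (1 - w) ^ (a + 1) := by
    intro t ht
    refine ⟨intervalIntegral.integral_nonneg ht.1 fun s hs ↦ hy₀ s ⟨hs.1, hs.2.trans ht.2⟩,
      le_trans (mul_le_mul_of_nonneg_left ?_ ha.le) hyT⟩
    refine intervalIntegral.integral_mono_interval le_rfl ht.1 ht.2 ?_ hy
    exact (ae_restrict_iff' measurableSet_Ioc).2 (ae_of_all _ fun s hs ↦ hy₀ s ⟨hs.1.le, hs.2⟩)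
  have hderiv : ∀ t ∈ Icc 0 T,
      HasDerivAt (damageProfile a u₀) ((1 - damageProfile a u₀ (Y t)) ^ (-a)) (Y t) := fun t ht ↦
    hasDerivAt_damageProfile ha.ne' ((hYbound t ht).2.trans_lt
      (sub_lt_self _ (Real.rpow_pos_of_pos (sub_pos.2 hw) _)))
  have hmem : ∀ t ∈ Icc 0 T, damageProfile a u₀ (Y t) ∈ Icc 0 w := fun t ht ↦
    damageProfile_mem_Icc ha hw.le hu₀ (hYbound t ht).1 (hYbound t ht).2
  have hYcont : ContinuousOn Y (Icc 0 T) :=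
    (intervalIntegral.continuousOn_primitive_interval' hy left_mem_uIcc).mono Icc_subset_uIcc
  refine ⟨fun t ht ↦ (hderiv t ht).continuousAt.comp_continuousWithinAt (hYcont t ht), hmem,
    fun t ht ↦ ?_⟩
  have hsub := uIcc_left_subset_Icc ht
  have hchain := integral_comp_mul_of_eq_add_integral (u := Y)
    (g' := fun x ↦ (1 - damageProfile a u₀ x) ^ (-a))
    (hy.mono_set (hsub.trans Icc_subset_uIcc))
    (fun s _ ↦ by rw [hY₀, zero_add])
    (forall_mem_image.2 fun s hs ↦ hderiv s (hsub hs))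
    ((continuousOn_const.sub fun x hx ↦ by
        obtain ⟨s, hs, rfl⟩ := hx
        exact (hderiv s (hsub hs)).continuousAt.continuousWithinAt).rpow_const
      (forall_mem_image.2 fun s hs ↦ .inl (sub_pos.2 ((hmem s (hsub hs)).2.trans_lt hw)).ne'))
  rw [hchain, hY₀, damageProfile_zero ha.ne' hu₀.2]
  ring

theorem add_one_mul_integral_le {w0 : ℝ} (ha : 0 ≤ a) (hT : 0 < T) (hw : w < 1) (hw0 : w0 ≤ 1)
    (hu₀ : u₀ ≤ w0) (hy : IntervalIntegrable y volume 0 T)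
    (hyM : ∀ t ∈ Icc 0 T, y t ≤ T⁻¹ * (w - w0) * (1 - w) ^ a) :
    (a + 1) * ∫ s in 0..T, y s ≤ (1 - u₀) ^ (a + 1) - (1 - w) ^ (a + 1) := by
  have htotal : ∫ s in 0..T, y s ≤ (1 - w) ^ a * (w - w0) := by
    calc ∫ s in 0..T, y s ≤ ∫ _ in 0..T, T⁻¹ * (w - w0) * (1 - w) ^ a :=
          intervalIntegral.integral_mono_on hT.le hy intervalIntegrable_const hyM
      _ = (1 - w) ^ a * (w - w0) := by
          rw [intervalIntegral.integral_const, smul_eq_mul]; field_simp; ring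
  have htangent := rpow_add_one_add_tangent_le ha (sub_pos.2 hw) (sub_nonneg.2 hw0)
  have hmono : (1 - w0) ^ (a + 1) ≤ (1 - u₀) ^ (a + 1) :=
    Real.rpow_le_rpow (sub_nonneg.2 hw0) (sub_le_sub_left hu₀ 1) (by linarith)
  rw [sub_sub_sub_cancel_left] at htangent
  linarith [mul_le_mul_of_nonneg_left htotal (by linarith : 0 ≤ a + 1)]

end DamageSolution

theorem damage_field_existence_uniqueness_general {X : Type*} [MeasurableSpace X]
    {T a w0 w1 : ℝ} (hT : 0 < T) (ha : 0 ≤ a) (hw01 : w0 ≤ w1) (hw1 : w1 < 1)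
    {Ω : Set X} {d0 : X → ℝ} (hd0_meas : Measurable fun x : Ω ↦ d0 x)
    (hd0_b : ∀ x ∈ Ω, d0 x ∈ Icc 0 w0) {y : ℝ → X → ℝ}
    (hy_meas : Measurable fun p : Icc (0 : ℝ) T × Ω ↦ y p.1 p.2)
    (hy_b : ∀ t ∈ Icc 0 T, ∀ x ∈ Ω, y t x ∈ Icc 0 (T⁻¹ * (w1 - w0) * (1 - w1) ^ a)) :
    ∃ d : ℝ → X → ℝ,
      (∀ x ∈ Ω, IsDamageSolution a w1 T (d0 x) (y · x) (d · x)) ∧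
      (∀ t ∈ Icc 0 T, Measurable fun x : Ω ↦ d t x) ∧
      (∀ x ∈ Ω, ∀ t₁ ∈ Icc 0 T, ∀ t₂ ∈ Icc 0 T,
        |d t₁ x - d t₂ x| ≤ T⁻¹ * (w1 - w0) * |t₁ - t₂|) ∧
      ∀ d' : ℝ → X → ℝ, (∀ x ∈ Ω, IsDamageSolution a w1 T (d0 x) (y · x) (d' · x)) →
        ∀ x ∈ Ω, ∀ t ∈ Icc 0 T, d' t x = d t x := by
  have ha₁ : 0 < a + 1 := by linarith
  have hyM : ∀ x ∈ Ω, ∀ t ∈ Icc 0 T, |y t x| ≤ T⁻¹ * (w1 - w0) * (1 - w1) ^ a :=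
    fun x hx t ht ↦ (abs_of_nonneg (hy_b t ht x hx).1).trans_le (hy_b t ht x hx).2
  have hy : ∀ x ∈ Ω, IntervalIntegrable (y · x) volume 0 T := fun x hx ↦
    intervalIntegrable_of_stronglyMeasurable_subtype hT.le
      (hy_meas.comp (measurable_prodMk_right (y := (⟨x, hx⟩ : Ω)))).stronglyMeasurable (hyM x hx)
  let d : ℝ → X → ℝ := fun t x ↦ damageProfile a (d0 x) (∫ s in 0..t, y s x)
  have hd : ∀ x ∈ Ω, IsDamageSolution a w1 T (d0 x) (y · x) (d · x) := fun x hx ↦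
    isDamageSolution_damageProfile ha₁ hw1
      ⟨(hd0_b x hx).1, (hd0_b x hx).2.trans (hw01.trans hw1.le)⟩ (hy x hx)
      (fun t ht ↦ (hy_b t ht x hx).1) <|
      add_one_mul_integral_le ha hT hw1 (hw01.trans hw1.le) (hd0_b x hx).2 (hy x hx)
        fun t ht ↦ (hy_b t ht x hx).2
  refine ⟨d, hd, fun t ht ↦ ?_, fun x hx t₁ h₁ t₂ h₂ ↦ ?_,
    fun d' hd' x hx t ht ↦ (hd' x hx).eq_damageProfile ha₁.ne' hw1 (hy x hx) ht⟩
  · have hY : Measurable fun x : Ω ↦ ∫ s in 0..t, y s x :=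
      (stronglyMeasurable_intervalIntegral_of_prod_subtype (f := fun s (x : Ω) ↦ y s x)
        hy_meas.stronglyMeasurable ht).measurable
    exact measurable_damageProfile hd0_meas hY
  · have hconst : (1 - w1) ^ (-a) * (T⁻¹ * (w1 - w0) * (1 - w1) ^ a) = T⁻¹ * (w1 - w0) := by
      rw [mul_left_comm, ← Real.rpow_add (sub_pos.2 hw1), neg_add_cancel, Real.rpow_zero, mul_one]
    exact hconst ▸ (hd x hx).abs_sub_le ha hw1 (hy x hx) (hyM x hx) h₁ h₂

/-- Pointwise-in-space solvability of the damage evolution: there is a unique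
function `d(t,x)` which, for every `x ∈ Ω`, continuously solves the damage
integral equation in time with initial value `d₀(x)` and source `y(·,x)`;
it is measurable in `x` for every fixed `t` and Lipschitz in `t` with constant
`T⁻¹(ω₁ − ω₀)`. -/
theorem damage_field_existence_uniqueness
    (T a w0 w1 : ℝ) (hT : 0 < T) (ha : 1 ≤ a)
    (hw0 : 0 ≤ w0) (hw01 : w0 ≤ w1) (hw1 : w1 < 1)
    (k : ℕ) (Ω : Set (Fin k → ℝ)) (hΩ : MeasurableSet Ω)
    (d0 : (Fin k → ℝ) → ℝ)
    (hd0_meas : Measurable fun x : Ω => d0 x)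
    (hd0_b : ∀ x ∈ Ω, d0 x ∈ Icc (0 : ℝ) w0)
    (y : ℝ → (Fin k → ℝ) → ℝ)
    (hy_meas : Measurable fun p : Icc (0 : ℝ) T × Ω => y p.1 p.2)
    (hy_b : ∀ t ∈ Icc (0 : ℝ) T, ∀ x ∈ Ω,
      y t x ∈ Icc (0 : ℝ) (T⁻¹ * (w1 - w0) * (1 - w1) ^ a)) :
    ∃ d : ℝ → (Fin k → ℝ) → ℝ,
      (∀ x ∈ Ω,
        ContinuousOn (fun t => d t x) (Icc (0 : ℝ) T) ∧
        (∀ t ∈ Icc (0 : ℝ) T, d t x ∈ Icc (0 : ℝ) w1) ∧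
        (∀ t ∈ Icc (0 : ℝ) T,
          d t x = d0 x + ∫ ξ in (0 : ℝ)..t, (1 - d ξ x) ^ (-a) * y ξ x)) ∧
      (∀ t ∈ Icc (0 : ℝ) T, Measurable fun x : Ω => d t x) ∧
      (∀ x ∈ Ω, ∀ t₁ ∈ Icc (0 : ℝ) T, ∀ t₂ ∈ Icc (0 : ℝ) T,
        |d t₁ x - d t₂ x| ≤ T⁻¹ * (w1 - w0) * |t₁ - t₂|) ∧
      (∀ d' : ℝ → (Fin k → ℝ) → ℝ,
        (∀ x ∈ Ω,
          ContinuousOn (fun t => d' t x) (Icc (0 : ℝ) T) ∧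
          (∀ t ∈ Icc (0 : ℝ) T, d' t x ∈ Icc (0 : ℝ) w1) ∧
          (∀ t ∈ Icc (0 : ℝ) T,
            d' t x = d0 x + ∫ ξ in (0 : ℝ)..t, (1 - d' ξ x) ^ (-a) * y ξ x)) →
        ∀ x ∈ Ω, ∀ t ∈ Icc (0 : ℝ) T, d' t x = d t x) :=
  damage_field_existence_uniqueness_general hT (zero_le_one.trans ha) hw01 hw1 hd0_meas hd0_b
    hy_meas hy_b
end
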